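/- Let α ∈ (ρ_c^0, 1) with α ≠ 1 − ρ_c^0 and β ∈ (1 − ρ_c^1, 1) with β ≠ ρ_c^1 (the transitional/canard parameter regions), and let x ∈ (0,1). Then for every δ > 0 there exists ε_0 > 0 such that for every ε ∈ (0, ε_0) and every twice continuously differentiable ρ : [0,1] → ℝ solving the stationary boundary value problem one has |ρ(x) − ρ_Sc(x)| < δ, where ρ_Sc(x) = ρ_c^+(x) for x ≤ ξ* and ρ_Sc(x) = ρ_c^−(x) for x ≥ ξ*; i.e., in the interior the solutions converge pointwise to the canard profile, which makes a transition from high density (ρ > 1/2) before the bottleneck to low density (ρ < 1/2) after it. -/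

import Mathlib

open Set

/-- The total flux `j(x) = -ε ρ'(x) + ρ(x)(1-ρ(x))` of a density profile `ρ` on `[0,1]`. -/
noncomputable def flux (ε : ℝ) (ρ : ℝ → ℝ) (x : ℝ) : ℝ :=
  -ε * derivWithin ρ (Icc (0:ℝ) 1) x + ρ x * (1 - ρ x)

/-- `ρ` is a (twice continuously differentiable) solution of the stationary boundary value
problem: `(k j)' = 0` on `[0,1]`, `j(0) = α(1-ρ(0))`, `j(1) = β ρ(1)`. -/
def IsStatSol (k : ℝ → ℝ) (ε α β : ℝ) (ρ : ℝ → ℝ) : Prop :=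
  ContDiffOn ℝ 2 ρ (Icc (0:ℝ) 1) ∧
  (∀ x ∈ Icc (0:ℝ) 1, derivWithin (fun y => k y * flux ε ρ y) (Icc (0:ℝ) 1) x = 0) ∧
  flux ε ρ 0 = α * (1 - ρ 0) ∧
  flux ε ρ 1 = β * ρ 1

/-- Upper canard branch `ρ_c^+(ξ) = (1/2)(1 + √(1 - k(ξ*)/k(ξ)))`. -/
noncomputable def rhoCPlus (k : ℝ → ℝ) (ξs ξ : ℝ) : ℝ :=
  1/2 * (1 + Real.sqrt (1 - k ξs / k ξ))

/-- Lower canard branch `ρ_c^-(ξ) = (1/2)(1 - √(1 - k(ξ*)/k(ξ)))`. -/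
noncomputable def rhoCMinus (k : ℝ → ℝ) (ξs ξ : ℝ) : ℝ :=
  1/2 * (1 - Real.sqrt (1 - k ξs / k ξ))

/-- The singular canard `ρ_Sc`: upper branch before the bottleneck, lower branch after. -/
noncomputable def rhoSc (k : ℝ → ℝ) (ξs ξ : ℝ) : ℝ :=
  if ξ ≤ ξs then rhoCPlus k ξs ξ else rhoCMinus k ξs ξ

/-- `ρ_c^0 = ρ_c^-(0)`. -/
noncomputable def rhoC0 (k : ℝ → ℝ) (ξs : ℝ) : ℝ := rhoCMinus k ξs 0

/-- `ρ_c^1 = ρ_c^+(1)`. -/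
noncomputable def rhoC1 (k : ℝ → ℝ) (ξs : ℝ) : ℝ := rhoCPlus k ξs 1

/-- Admissible coefficient: continuous, positive, strict global minimum at `ξ`. -/
structure Ad (k : ℝ → ℝ) (ξ : ℝ) : Prop where
  cont : Continuous k
  pos : ∀ x ∈ Icc (0:ℝ) 1, 0 < k x
  mem : ξ ∈ Ioo (0:ℝ) 1
  min : ∀ x ∈ Icc (0:ℝ) 1, x ≠ ξ → k ξ < k x

/-- Shifted first order form of the boundary value problem, `u = ρ - 1/2`. -/
structure Sol (k : ℝ → ℝ) (ε α β c : ℝ) (u : ℝ → ℝ) : Prop where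
  der : ∀ x ∈ Icc (0:ℝ) 1,
    HasDerivWithinAt u ((1/4 - c / k x - u x ^ 2) / ε) (Icc (0:ℝ) 1) x
  left : u 0 = 1/2 - c / (α * k 0)
  right : u 1 = c / (β * k 1) - 1/2

lemma Ad.le {k : ℝ → ℝ} {ξ : ℝ} (H : Ad k ξ) {y : ℝ} (hy : y ∈ Icc (0:ℝ) 1) : k ξ ≤ k y := by
  by_cases h : y = ξ
  · rw [h]
  · exact (H.min y hy h).le

lemma Ad.pos0 {k : ℝ → ℝ} {ξ : ℝ} (H : Ad k ξ) : 0 < k ξ :=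
  H.pos ξ ⟨H.mem.1.le, H.mem.2.le⟩

lemma Ad.refl {k : ℝ → ℝ} {ξ : ℝ} (H : Ad k ξ) : Ad (fun x => k (1 - x)) (1 - ξ) where
  cont := H.cont.comp (by fun_prop)
  pos x hx := H.pos _ ⟨by linarith [hx.2], by linarith [hx.1]⟩
  mem := ⟨by linarith [H.mem.2], by linarith [H.mem.1]⟩
  min x hx h := by
    have := H.min (1 - x) ⟨by linarith [hx.2], by linarith [hx.1]⟩ (fun h' => h (by linarith))
    simpa using this

lemma Sol.refl {k : ℝ → ℝ} {ε α β c : ℝ} {u : ℝ → ℝ} (h : Sol k ε α β c u) :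
    Sol (fun x => k (1 - x)) ε β α c (fun x => - u (1 - x)) where
  der x hx := by
    have hx' : 1 - x ∈ Icc (0:ℝ) 1 := ⟨by linarith [hx.2], by linarith [hx.1]⟩
    have h1 := h.der (1 - x) hx'
    have h2 : HasDerivWithinAt (fun x : ℝ => 1 - x) (-1) (Icc (0:ℝ) 1) x := by
      simpa using ((hasDerivAt_id x).const_sub 1).hasDerivWithinAt
    have h3 := (HasDerivWithinAt.comp x h1 h2
      (fun y hy => ⟨by linarith [hy.2], by linarith [hy.1]⟩)).neg
    refine h3.congr_deriv ?_
    ring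
  left := by simp [h.right]
  right := by simp [h.left]

lemma Sol.cont {k : ℝ → ℝ} {ε α β c : ℝ} {u : ℝ → ℝ} (h : Sol k ε α β c u) {a b : ℝ}
    (ha : 0 ≤ a) (hb : b ≤ 1) : ContinuousOn u (Icc a b) := fun x hx =>
  ((h.der x ⟨ha.trans hx.1, hx.2.trans hb⟩).continuousWithinAt).mono (Icc_subset_Icc ha hb)

lemma Sol.derR {k : ℝ → ℝ} {ε α β c : ℝ} {u : ℝ → ℝ} (h : Sol k ε α β c u) {a b : ℝ}
    (ha : 0 ≤ a) (hb : b ≤ 1) : ∀ x ∈ Ico a b,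
    HasDerivWithinAt u ((1/4 - c / k x - u x ^ 2) / ε) (Ici x) x := fun x hx =>
  (h.der x ⟨ha.trans hx.1, hx.2.le.trans hb⟩).mono_of_mem_nhdsWithin
    (Filter.mem_of_superset (Icc_mem_nhdsGE (hx.2.trans_le hb))
      (Icc_subset_Icc (ha.trans hx.1) le_rfl))

lemma line_der (p m a x : ℝ) : HasDerivAt (fun x => p + m * (x - a)) m x := by
  simpa using (((hasDerivAt_id x).sub_const a).const_mul m).const_add p

lemma Sol.lower {k : ℝ → ℝ} {ε α β c : ℝ} {u : ℝ → ℝ} (h : Sol k ε α β c u) (hε : 0 < ε)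
    {a b p q : ℝ} (ha : 0 ≤ a) (hab : a < b) (hb : b ≤ 1) (hpq : p ≤ q) (hp : p ≤ u a)
    (H : ∀ y ∈ Icc a b, ∀ w ∈ Icc p q, (q - p) / (b - a) * ε < 1/4 - c / k y - w ^ 2) :
    q ≤ u b := by
  have hba : 0 < b - a := by linarith
  have hm : 0 ≤ (q - p) / (b - a) := div_nonneg (by linarith) hba.le
  have key := image_le_of_deriv_right_lt_deriv_boundary' (f := fun x => p + (q-p)/(b-a) * (x - a))
    (f' := fun _ => (q-p)/(b-a)) (a := a) (b := b) (B := u)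
    (B' := fun x => (1/4 - c / k x - u x ^ 2) / ε)
    (by fun_prop) (fun x _ => (line_der _ _ _ x).hasDerivWithinAt) (by simpa using hp)
    (h.cont ha hb) (h.derR ha hb)
    (fun x hx he => by
      rw [lt_div_iff₀ hε]
      apply H x ⟨hx.1, hx.2.le⟩
      rw [← he]
      constructor
      · have := mul_nonneg hm (sub_nonneg.2 hx.1); linarith
      · have h1 : (q-p)/(b-a) * (x - a) ≤ (q-p)/(b-a) * (b - a) :=
          mul_le_mul_of_nonneg_left (by linarith [hx.2]) hm
        rw [div_mul_cancel₀ _ hba.ne'] at h1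
        linarith)
  have := key (x := b) ⟨hab.le, le_rfl⟩
  simp only [div_mul_cancel₀ _ hba.ne'] at this
  linarith

lemma Sol.upper {k : ℝ → ℝ} {ε α β c : ℝ} {u : ℝ → ℝ} (h : Sol k ε α β c u) (hε : 0 < ε)
    {a b p q : ℝ} (ha : 0 ≤ a) (hab : a < b) (hb : b ≤ 1) (hpq : q ≤ p) (hp : u a ≤ p)
    (H : ∀ y ∈ Icc a b, ∀ w ∈ Icc q p, 1/4 - c / k y - w ^ 2 < - ((p - q) / (b - a) * ε)) :
    u b ≤ q := by
  have hba : 0 < b - a := by linarith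
  have hm : 0 ≤ (p - q) / (b - a) := div_nonneg (by linarith) hba.le
  have key := image_le_of_deriv_right_lt_deriv_boundary (f := u)
    (f' := fun x => (1/4 - c / k x - u x ^ 2) / ε) (a := a) (b := b)
    (h.cont ha hb) (h.derR ha hb)
    (B := fun x => p + (-((p-q)/(b-a))) * (x - a))
    (B' := fun _ => -((p-q)/(b-a))) (by simpa using hp) (fun x => (line_der _ _ _ x))
    (fun x hx he => by
      rw [div_lt_iff₀ hε, neg_mul]
      apply H x ⟨hx.1, hx.2.le⟩
      rw [he]
      constructor
      · have h1 : (p-q)/(b-a) * (x - a) ≤ (p-q)/(b-a) * (b - a) :=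
          mul_le_mul_of_nonneg_left (by linarith [hx.2]) hm
        rw [div_mul_cancel₀ _ hba.ne'] at h1
        linarith
      · have := mul_nonneg hm (sub_nonneg.2 hx.1); linarith)
  have := key (x := b) ⟨hab.le, le_rfl⟩
  simp only [neg_mul, div_mul_cancel₀ _ hba.ne'] at this
  linarith

lemma Sol.cpos {k : ℝ → ℝ} {ξ ε α β c : ℝ} {u : ℝ → ℝ} (K : Ad k ξ) (h : Sol k ε α β c u)
    (hε : 0 < ε) (hα : 0 < α) (hβ : 0 < β) : 0 < c := by
  by_contra hc
  push Not at hc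
  have h0 := h.left
  have h1 := h.right
  have e0 : c / (α * k 0) ≤ 0 :=
    div_nonpos_of_nonpos_of_nonneg hc (mul_pos hα (K.pos 0 (by simp))).le
  have e1 : c / (β * k 1) ≤ 0 :=
    div_nonpos_of_nonpos_of_nonneg hc (mul_pos hβ (K.pos 1 (by simp))).le
  have := h.lower hε (a := 0) (b := 1) (p := 0) (q := 0) le_rfl one_pos le_rfl le_rfl
    (by linarith) (fun y hy w hw => by
      have : w = 0 := le_antisymm hw.2 hw.1
      have := div_nonpos_of_nonpos_of_nonneg hc (K.pos y hy).le
      subst w; norm_num; linarith)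
  linarith

lemma Sol.bdd {k : ℝ → ℝ} {ξ ε α β c : ℝ} {u : ℝ → ℝ} (K : Ad k ξ) (h : Sol k ε α β c u)
    (hε : 0 < ε) (hα : 0 < α) (hc : 0 < c) {x : ℝ} (hx : x ∈ Icc (0:ℝ) 1) : u x ≤ 1/2 := by
  have h0 := h.left
  have e0 : 0 < c / (α * k 0) := div_pos hc (mul_pos hα (K.pos 0 (by simp)))
  rcases hx.1.eq_or_lt with rfl | hx0
  · linarith
  refine h.upper hε (a := 0) (b := x) (p := 1/2) le_rfl hx0 hx.2 le_rfl (by linarith) ?_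
  intro y hy w hw
  have : w = 1/2 := le_antisymm hw.2 hw.1
  have := div_pos hc (K.pos y ⟨hy.1, hy.2.trans hx.2⟩)
  subst w; norm_num; linarith

lemma F_lower {k : ℝ → ℝ} {ξ c η y : ℝ} (K : Ad k ξ) (hη : 0 < η) (hy : y ∈ Icc (0:ℝ) 1)
    (hc : c < k ξ / 4 + η) : 1/4 - k ξ / (4 * k y) - η / k ξ ≤ 1/4 - c / k y := by
  have h1 : c / k y ≤ (k ξ / 4 + η) / k y := div_le_div_of_nonneg_right hc.le (K.pos y hy).le
  have h2 : η / k y ≤ η / k ξ := div_le_div_of_nonneg_left hη.le K.pos0 (K.le hy)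
  have h3 : (k ξ / 4 + η) / k y = k ξ / (4 * k y) + η / k y := by
    have := (K.pos y hy).ne'
    field_simp
  linarith

lemma F_upper {k : ℝ → ℝ} {ξ c η y : ℝ} (K : Ad k ξ) (hη : 0 < η) (hy : y ∈ Icc (0:ℝ) 1)
    (hc : k ξ / 4 - η < c) : 1/4 - c / k y ≤ 1/4 - k ξ / (4 * k y) + η / k ξ := by
  have h1 : (k ξ / 4 - η) / k y ≤ c / k y := div_le_div_of_nonneg_right hc.le (K.pos y hy).le
  have h2 : η / k y ≤ η / k ξ := div_le_div_of_nonneg_left hη.le K.pos0 (K.le hy)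
  have h3 : (k ξ / 4 - η) / k y = k ξ / (4 * k y) - η / k y := by
    have := (K.pos y hy).ne'
    field_simp
  linarith

lemma F_nonneg {k : ℝ → ℝ} {ξ y : ℝ} (K : Ad k ξ) (hy : y ∈ Icc (0:ℝ) 1) :
    0 ≤ 1/4 - k ξ / (4 * k y) := by
  have h := K.pos y hy
  have : k ξ / (4 * k y) ≤ 1/4 := by
    rw [div_le_iff₀ (by linarith)]; linarith [K.le hy]
  linarith

lemma F_pos {k : ℝ → ℝ} {ξ y : ℝ} (K : Ad k ξ) (hy : y ∈ Icc (0:ℝ) 1) (hne : y ≠ ξ) :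
    0 < 1/4 - k ξ / (4 * k y) := by
  have h := K.pos y hy
  have : k ξ / (4 * k y) < 1/4 := by
    rw [div_lt_iff₀ (by linarith)]; linarith [K.min y hy hne]
  linarith

lemma F_cont {k : ℝ → ℝ} {ξ : ℝ} (K : Ad k ξ) :
    ContinuousOn (fun y => 1/4 - k ξ / (4 * k y)) (Icc (0:ℝ) 1) := by
  have := K.cont
  refine continuousOn_const.sub (continuousOn_const.div (by fun_prop) ?_)
  intro y hy
  have := K.pos y hy
  positivity

lemma F_near {k : ℝ → ℝ} {ξ : ℝ} (K : Ad k ξ) {y : ℝ} (hy : y ∈ Icc (0:ℝ) 1) {κ : ℝ}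
    (hκ : 0 < κ) : ∃ τ > 0, ∀ z ∈ Icc (0:ℝ) 1, |z - y| < τ →
      |(1/4 - k ξ / (4 * k z)) - (1/4 - k ξ / (4 * k y))| < κ := by
  obtain ⟨τ, h1, h2⟩ := Metric.continuousWithinAt_iff.1 (F_cont K y hy) κ hκ
  exact ⟨τ, h1, fun z hz hzy => h2 hz hzy⟩

/-- There is a positive parameter below finitely many thresholds `t / m`. -/
lemma exists_small (m t : ℝ) (ht : 0 < t) (hm : 0 ≤ m) : ∃ η > 0, m * η < t := by
  refine ⟨t / (m + 1), by positivity, ?_⟩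
  rw [mul_div_assoc', div_lt_iff₀ (by linarith)]
  nlinarith

lemma left_pos {k : ℝ → ℝ} {ξ α : ℝ} (K : Ad k ξ)
    (hα : 1/2 - √(1/4 - k ξ / (4 * k 0)) < α) (hα0 : 0 < α) {x : ℝ} (hx : x ∈ Ioo 0 ξ) :
    ∃ η > 0, ∀ ε c β u, 0 < ε → ε < η → c < k ξ / 4 + η → Sol k ε α β c u → 0 ≤ u x := by
  have m0 : (0:ℝ) ∈ Icc (0:ℝ) 1 := by simp
  have hξ1 := K.mem.2
  have k0 := K.pos 0 m0
  have kξ := K.pos0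
  set s := √(1/4 - k ξ / (4 * k 0)) with hs
  have hF0 := F_pos K m0 K.mem.1.ne
  have s2 : s ^ 2 = 1/4 - k ξ / (4 * k 0) := Real.sq_sqrt hF0.le
  have s0 : 0 < s := Real.sqrt_pos.2 hF0
  have hv1 : k ξ / (4 * k 0) / α - 1/2 < s := by
    have : k ξ / (4 * k 0) / α < 1/2 + s := by
      rw [div_lt_iff₀ hα0]; nlinarith
    linarith
  obtain ⟨v0, hv0⟩ : ∃ v0, v0 = max 0 (k ξ / (4 * k 0) / α - 1/2) := ⟨_, rfl⟩
  have v0a : 0 ≤ v0 := hv0 ▸ le_max_left _ _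
  have v0b : k ξ / (4 * k 0) / α - 1/2 ≤ v0 := hv0 ▸ le_max_right _ _
  have v0c : v0 < s := hv0 ▸ max_lt s0 hv1
  obtain ⟨v, hv, hvs⟩ := exists_between v0c
  have hγ : 0 < s ^ 2 - v ^ 2 := by nlinarith
  obtain ⟨γ, hγd⟩ : ∃ γ, γ = s ^ 2 - v ^ 2 := ⟨_, rfl⟩
  rw [← hγd] at hγ
  obtain ⟨τ0, hτ0, hτ⟩ := F_near K m0 (κ := γ/4) (by linarith)
  obtain ⟨τ, t0, t1⟩ : ∃ τ, 0 < τ ∧ τ < min τ0 x := exists_between (lt_min hτ0 hx.1)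
  have tτ := t1.trans_le (min_le_left _ _)
  have tx := t1.trans_le (min_le_right _ _)
  have _hx2 := hx.2
  have hsub : Icc 0 x ⊆ Icc (0:ℝ) 1 := Icc_subset_Icc le_rfl (hx.2.le.trans hξ1.le)
  obtain ⟨z, hz, hzmin⟩ := isCompact_Icc.exists_isMinOn (nonempty_Icc.2 hx.1.le)
    ((F_cont K).mono hsub)
  have hzpos := F_pos K (hsub hz) (hz.2.trans_lt hx.2).ne
  set γ2 := 1/4 - k ξ / (4 * k z)
  obtain ⟨η1, h1, h1'⟩ := exists_small (1 / k ξ) (γ/4) (by linarith) (by positivity)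
  obtain ⟨η2, h2, h2'⟩ := exists_small (1 / (α * k 0)) (v - v0) (by linarith) (by positivity)
  obtain ⟨η3, h3, h3'⟩ := exists_small ((v - -v) / (τ - 0)) (γ/4) (by linarith)
    (div_nonneg (by linarith) (by linarith))
  obtain ⟨η4, h4, h4'⟩ := exists_small (1 / k ξ) γ2 hzpos (by positivity)
  obtain ⟨η, hη, hη'⟩ : ∃ η, 0 < η ∧ η < min (min η1 η2) (min η3 η4) :=
    exists_between (by simp [h1, h2, h3, h4])
  simp only [lt_min_iff] at hη'
  obtain ⟨⟨l1, l2⟩, l3, l4⟩ := hη'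
  refine ⟨η, hη, fun ε c β u hε hεη hc h => ?_⟩
  have g1 : η / k ξ < γ/4 := by
    have := mul_le_mul_of_nonneg_left l1.le (show 0 ≤ 1 / k ξ by positivity)
    rw [one_div_mul_eq_div] at this; linarith
  have g4 : η / k ξ < γ2 := by
    have := mul_le_mul_of_nonneg_left l4.le (show 0 ≤ 1 / k ξ by positivity)
    rw [one_div_mul_eq_div] at this; linarith
  have g2 : η / (α * k 0) < v - v0 := by
    have := mul_le_mul_of_nonneg_left l2.le (show 0 ≤ 1 / (α * k 0) by positivity)
    rw [one_div_mul_eq_div] at this; linarith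
  have g3 : (v - -v) / (τ - 0) * ε < γ/4 := by
    have := mul_le_mul_of_nonneg_left (hεη.trans l3).le
      (show 0 ≤ (v - -v) / (τ - 0) from div_nonneg (by linarith) (by linarith))
    linarith
  have hu0 : -v ≤ u 0 := by
    rw [h.left]
    have a1 : c / (α * k 0) ≤ (k ξ / 4 + η) / (α * k 0) :=
      div_le_div_of_nonneg_right hc.le (by positivity)
    have a2 : (k ξ / 4 + η) / (α * k 0) = k ξ / (4 * k 0) / α + η / (α * k 0) := by
      field_simp
    linarith
  have huτ : v ≤ u τ := by
    refine h.lower hε le_rfl t0 (by linarith) (by linarith) hu0 ?_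
    intro y hy w hw
    have hy1 : y ∈ Icc (0:ℝ) 1 := ⟨hy.1, by linarith [hy.2]⟩
    have b1 := F_lower K hη hy1 hc
    have b2 := (abs_lt.1 (hτ y hy1 (by rw [sub_zero, abs_of_nonneg hy.1]; linarith [hy.2]))).1
    have b3 : w ^ 2 ≤ v ^ 2 := sq_le_sq' hw.1 hw.2
    linarith
  refine h.lower hε t0.le tx (by linarith [hx.2]) (p := 0) le_rfl (by linarith) ?_
  intro y hy w hw
  have hy0 : y ∈ Icc 0 x := ⟨by linarith [hy.1], hy.2⟩
  have b1 := F_lower K hη (hsub hy0) hc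
  have b2 : γ2 ≤ _ := hzmin hy0
  have : w = 0 := le_antisymm hw.2 hw.1
  subst w
  norm_num at b2 b1 ⊢
  linarith

/-- `c` cannot be much larger than `k ξ / 4`. -/
lemma c_upper {k : ℝ → ℝ} {ξ α β : ℝ} (K : Ad k ξ) (hα : 0 < α) (hβ : 0 < β) {η : ℝ}
    (hη : 0 < η) : ∃ ε0 > 0, ∀ ε c u, 0 < ε → ε < ε0 → Sol k ε α β c u → c < k ξ / 4 + η := by
  have kξ := K.pos0
  have mξ : ξ ∈ Icc (0:ℝ) 1 := ⟨K.mem.1.le, K.mem.2.le⟩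
  have m1 : (1:ℝ) ∈ Icc (0:ℝ) 1 := by simp
  obtain ⟨b, hb, hb'⟩ : ∃ b, ξ < b ∧ b ≤ 1 ∧ ∀ y ∈ Icc ξ b, k y < k ξ + η := by
    obtain ⟨τ, h1, h2⟩ := Metric.continuousAt_iff.1 (K.cont.continuousAt (x := ξ)) η hη
    refine ⟨min 1 (ξ + τ/2), lt_min K.mem.2 (by linarith), min_le_left _ _, fun y hy => ?_⟩
    have := hy.2.trans (min_le_right _ _)
    have := h2 (x := y) (by rw [Real.dist_eq, abs_of_nonneg (by linarith [hy.1])]; linarith)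
    rw [Real.dist_eq] at this
    linarith [(abs_lt.1 this).2]
  obtain ⟨hb1, hkb⟩ := hb'
  obtain ⟨γ, hγ⟩ : ∃ γ, γ = (k ξ / 4 + η) / (k ξ + η) - 1/4 := ⟨_, rfl⟩
  have hγ0 : 0 < γ := by
    have : 1/4 < (k ξ / 4 + η) / (k ξ + η) := by
      rw [lt_div_iff₀ (by linarith)]; linarith
    linarith
  obtain ⟨ε0, h0, h0'⟩ := exists_small ((1/2 - -1) / (b - ξ)) γ hγ0
    (div_nonneg (by norm_num) (by linarith))
  refine ⟨ε0, h0, fun ε c u hε hε0 h => ?_⟩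
  by_contra hc
  push Not at hc
  have cp := h.cpos K hε hα hβ
  have ub := h.bdd K hε hα cp mξ
  have lb : -(1/2) ≤ u b := by
    have := h.refl.bdd K.refl hε hβ cp (x := 1 - b) ⟨by linarith, by linarith [K.mem.1]⟩
    simp only [sub_sub_cancel] at this
    linarith
  have := h.upper hε K.mem.1.le hb hb1 (p := 1/2) (q := -1) (by norm_num) ub (by
    intro y hy w hw
    have hy1 : y ∈ Icc (0:ℝ) 1 := ⟨by linarith [K.mem.1, hy.1], by linarith [hy.2]⟩
    have a1 : (k ξ / 4 + η) / (k ξ + η) ≤ c / k y :=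
      div_le_div₀ cp.le hc (K.pos y hy1) (hkb y hy).le
    have a2 := mul_le_mul_of_nonneg_left hε0.le
      (show 0 ≤ (1/2 - -1) / (b - ξ) from div_nonneg (by norm_num) (by linarith))
    have := sq_nonneg w
    linarith)
  linarith

/-- `c` cannot be much smaller than `k ξ / 4`. -/
lemma c_lower {k : ℝ → ℝ} {ξ α β : ℝ} (K : Ad k ξ)
    (hα : 1/2 - √(1/4 - k ξ / (4 * k 0)) < α) (hα0 : 0 < α)
    (hβ : 1/2 - √(1/4 - k ξ / (4 * k 1)) < β) (hβ0 : 0 < β) {η : ℝ}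
    (hη : 0 < η) : ∃ ε0 > 0, ∀ ε c u, 0 < ε → ε < ε0 → Sol k ε α β c u → k ξ / 4 - η < c := by
  have kξ := K.pos0
  have hξ := K.mem
  obtain ⟨η1, h1, H1⟩ := left_pos K hα hα0 (x := ξ / 2) ⟨by linarith [hξ.1], by linarith [hξ.1]⟩
  obtain ⟨η2, h2, H2⟩ := left_pos K.refl (α := β) (by simpa using hβ) hβ0 (x := (1 - ξ) / 2)
    ⟨by linarith [hξ.2], by linarith [hξ.2]⟩
  simp only [sub_sub_cancel] at H2
  obtain ⟨γ, hγ⟩ : ∃ γ, γ = η / k ξ := ⟨_, rfl⟩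
  have hγ0 : 0 < γ := hγ ▸ by positivity
  obtain ⟨q, q0, q1⟩ : ∃ q, 0 < q ∧ q < min 1 (γ / 2) :=
    exists_between (lt_min one_pos (by linarith))
  have q2 := q1.trans_le (min_le_left _ _)
  have q3 := q1.trans_le (min_le_right _ _)
  have hlt : ξ / 2 < 1 - (1 - ξ) / 2 := by linarith
  obtain ⟨η3, h3, h3'⟩ := exists_small ((q - 0) / ((1 - (1 - ξ) / 2) - ξ / 2)) (γ/2) (by linarith)
    (div_nonneg (by linarith) (by linarith))
  refine ⟨min η1 (min η2 η3), by simp [h1, h2, h3], fun ε c u hε hε0 h => ?_⟩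
  simp only [lt_min_iff] at hε0
  obtain ⟨e1, e2, e3⟩ := hε0
  by_contra hc
  push Not at hc
  have cp := h.cpos K hε hα0 hβ0
  have a1 := H1 ε c β u hε e1 (by linarith) h
  have a2 := H2 ε c α _ hε e2 (by linarith) h.refl
  have := h.lower hε (by linarith [hξ.1]) hlt (by linarith [hξ.2]) (p := 0) (q := q) q0.le a1 (by
    intro y hy w hw
    have hy1 : y ∈ Icc (0:ℝ) 1 := ⟨by linarith [hξ.1, hy.1], by linarith [hξ.2, hy.2]⟩
    have b1 : c / k y ≤ (k ξ / 4 - η) / k ξ := div_le_div₀ (by linarith) hc kξ (K.le hy1)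
    have b2 : (k ξ / 4 - η) / k ξ = 1/4 - η / k ξ := by field_simp
    have b3 := mul_le_mul_of_nonneg_left e3.le
      (show 0 ≤ (q - 0) / ((1 - (1 - ξ) / 2) - ξ / 2) from
        div_nonneg (by linarith) (by linarith))
    have b4 : w ^ 2 ≤ q := by nlinarith [hw.1, hw.2]
    linarith)
  linarith

/-- Upper tracking. -/
lemma track_upper {k : ℝ → ℝ} {ξ α : ℝ} (K : Ad k ξ) (hα0 : 0 < α) {x : ℝ}
    (hx : x ∈ Ioo (0:ℝ) 1) {δ : ℝ} (hδ : 0 < δ) :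
    ∃ η > 0, ∀ ε c β u, 0 < ε → ε < η → k ξ / 4 - η < c → 0 < c → Sol k ε α β c u →
      u x ≤ √(1/4 - k ξ / (4 * k x)) + δ := by
  have kξ := K.pos0
  have mx : x ∈ Icc (0:ℝ) 1 := ⟨hx.1.le, hx.2.le⟩
  have s2 := Real.sq_sqrt (F_nonneg K mx)
  have s0 := Real.sqrt_nonneg (1/4 - k ξ / (4 * k x))
  set s := √(1/4 - k ξ / (4 * k x))
  have hγ : 0 < δ ^ 2 := by positivity
  obtain ⟨τ, hτ, hτ'⟩ := F_near K mx (κ := δ^2/4) (by linarith)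
  obtain ⟨t, t0, t1⟩ : ∃ t, 0 < t ∧ t < min τ x := exists_between (lt_min hτ hx.1)
  have tτ := t1.trans_le (min_le_left _ _)
  have tx := t1.trans_le (min_le_right _ _)
  have _hx2 := hx.2
  have hm : 0 ≤ (s + δ + 1 - (s + δ)) / (x - (x - t)) :=
    div_nonneg (by linarith) (by linarith)
  obtain ⟨η1, h1, h1'⟩ := exists_small (1 / k ξ) (δ^2/4) (by linarith) (by positivity)
  obtain ⟨η2, h2, h2'⟩ := exists_small ((s + δ + 1 - (s + δ)) / (x - (x - t))) (δ^2/4)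
    (by linarith) hm
  refine ⟨min η1 η2, lt_min h1 h2, fun ε c β u hε hεη hc cp h => ?_⟩
  have hc1 : k ξ / 4 - η1 < c := by linarith [min_le_left η1 η2]
  have hε2 := hεη.trans_le (min_le_right _ _)
  refine h.upper hε (a := x - t) (by linarith) (by linarith) hx.2.le (p := s + δ + 1)
    (by linarith) ?_ ?_
  · linarith [h.bdd K hε hα0 cp (x := x - t) ⟨by linarith, by linarith [hx.2]⟩]
  intro y hy w hw
  have hy1 : y ∈ Icc (0:ℝ) 1 := ⟨by linarith [hy.1], by linarith [hy.2, hx.2]⟩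
  have b1 := F_upper K h1 hy1 hc1
  have b2 := (abs_lt.1 (hτ' y hy1 (by
    rw [abs_lt]; constructor <;> linarith [hy.1, hy.2]))).2
  have b3 : (s + δ) ^ 2 ≤ w ^ 2 := pow_le_pow_left₀ (by linarith) hw.1 2
  have b4 := mul_le_mul_of_nonneg_left hε2.le hm
  rw [one_div_mul_eq_div] at h1'
  nlinarith

/-- Lower tracking to the left of the bottleneck. -/
lemma track_lower {k : ℝ → ℝ} {ξ α : ℝ} (K : Ad k ξ)
    (hα : 1/2 - √(1/4 - k ξ / (4 * k 0)) < α) (hα0 : 0 < α) {x : ℝ}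
    (hx : x ∈ Ioo (0:ℝ) ξ) {δ : ℝ} (hδ : 0 < δ) :
    ∃ η > 0, ∀ ε c β u, 0 < ε → ε < η → c < k ξ / 4 + η → Sol k ε α β c u →
      √(1/4 - k ξ / (4 * k x)) - δ ≤ u x := by
  have kξ := K.pos0
  have hξ1 := K.mem.2
  have mx : x ∈ Icc (0:ℝ) 1 := ⟨hx.1.le, by linarith [hx.2]⟩
  have s2 := Real.sq_sqrt (F_nonneg K mx)
  have s0 := Real.sqrt_nonneg (1/4 - k ξ / (4 * k x))
  set s := √(1/4 - k ξ / (4 * k x))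
  by_cases hsδ : s - δ < 0
  · obtain ⟨η, h1, H⟩ := left_pos K hα hα0 hx
    exact ⟨η, h1, fun ε c β u a b cc d => by linarith [H ε c β u a b cc d]⟩
  push Not at hsδ
  have hγ : 0 < δ ^ 2 := by positivity
  obtain ⟨τ, hτ, hτ'⟩ := F_near K mx (κ := δ^2/4) (by linarith)
  obtain ⟨t, t0, t1⟩ : ∃ t, 0 < t ∧ t < min τ x := exists_between (lt_min hτ hx.1)
  have tτ := t1.trans_le (min_le_left _ _)
  have tx := t1.trans_le (min_le_right _ _)
  have _hx2 := hx.2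
  obtain ⟨η0, h0, H0⟩ := left_pos K hα hα0 (x := x - t) ⟨by linarith, by linarith [hx.2]⟩
  have hm : 0 ≤ (s - δ - 0) / (x - (x - t)) :=
    div_nonneg (by linarith) (by linarith)
  obtain ⟨η1, h1, h1'⟩ := exists_small (1 / k ξ) (δ^2/4) (by linarith) (by positivity)
  obtain ⟨η2, h2, h2'⟩ := exists_small ((s - δ - 0) / (x - (x - t))) (δ^2/4)
    (by linarith) hm
  refine ⟨min η0 (min η1 η2), by simp [h0, h1, h2], fun ε c β u hε hεη hc h => ?_⟩
  have i0 := min_le_left η0 (min η1 η2)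
  have i1 := (min_le_right η0 (min η1 η2)).trans (min_le_left _ _)
  have i2 := (min_le_right η0 (min η1 η2)).trans (min_le_right _ _)
  refine h.lower hε (a := x - t) (by linarith) (by linarith) mx.2 (p := 0)
    (by linarith) (H0 ε c β u hε (by linarith) (by linarith) h) ?_
  intro y hy w hw
  have hy1 : y ∈ Icc (0:ℝ) 1 := ⟨by linarith [hy.1], by linarith [hy.2, mx.2]⟩
  have b1 := F_lower K h1 hy1 (c := c) (by linarith)
  have b2 := (abs_lt.1 (hτ' y hy1 (by
    rw [abs_lt]; constructor <;> linarith [hy.1, hy.2]))).1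
  have b3 : w ^ 2 ≤ (s - δ) ^ 2 := pow_le_pow_left₀ hw.1 hw.2 2
  have b4 := mul_le_mul_of_nonneg_left (hεη.trans_le i2).le hm
  rw [one_div_mul_eq_div] at h1'
  nlinarith

lemma track_left {k : ℝ → ℝ} {ξ α β : ℝ} (K : Ad k ξ)
    (hα : 1/2 - √(1/4 - k ξ / (4 * k 0)) < α) (hα0 : 0 < α)
    (hβ : 1/2 - √(1/4 - k ξ / (4 * k 1)) < β) (hβ0 : 0 < β) {x : ℝ}
    (hx : x ∈ Ioo (0:ℝ) 1) (hxξ : x ≤ ξ) {δ : ℝ} (hδ : 0 < δ) :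
    ∃ ε0 > 0, ∀ ε c u, 0 < ε → ε < ε0 → Sol k ε α β c u →
      |u x - √(1/4 - k ξ / (4 * k x))| ≤ δ := by
  obtain ⟨η1, h1, H1⟩ := track_upper K hα0 hx hδ
  obtain ⟨e1, p1, P1⟩ := c_lower K hα hα0 hβ hβ0 h1
  obtain ⟨η2, h2, H2⟩ : ∃ η > 0, ∀ ε c u, 0 < ε → ε < η → |c - k ξ / 4| < η → 0 < c →
      Sol k ε α β c u → √(1/4 - k ξ / (4 * k x)) - δ ≤ u x := by
    rcases hxξ.eq_or_lt with rfl | hlt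
    · obtain ⟨η, h, H⟩ := track_upper K.refl hβ0 (x := 1 - x)
        ⟨by linarith [hx.2], by linarith [hx.1]⟩ hδ
      refine ⟨η, h, fun ε c u a b cc cp d => ?_⟩
      have kx := K.pos0
      have e : 1/4 - k x / (4 * k x) = 0 := by field_simp; norm_num
      have := H ε c α _ a b (by simp only [sub_sub_cancel]; linarith [(abs_lt.1 cc).1]) cp d.refl
      simp only [sub_sub_cancel, e, Real.sqrt_zero] at this ⊢
      linarith
    · obtain ⟨η, h, H⟩ := track_lower K hα hα0 ⟨hx.1, hlt⟩ hδ
      exact ⟨η, h, fun ε c u a b cc _ d => H ε c β u a b (by linarith [(abs_lt.1 cc).2]) d⟩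
  obtain ⟨e2, p2, P2⟩ := c_lower K hα hα0 hβ hβ0 h2
  obtain ⟨e3, p3, P3⟩ := c_upper K hα0 hβ0 h2
  refine ⟨min (min η1 η2) (min e1 (min e2 e3)), by simp [*], fun ε c u hε he h => ?_⟩
  simp only [lt_min_iff] at he
  obtain ⟨⟨i1, i2⟩, i3, i4, i5⟩ := he
  have cp := h.cpos K hε hα0 hβ0
  have j1 := H1 ε c β u hε i1 (P1 ε c u hε i3 h) cp h
  have j2 := H2 ε c u hε i2 (abs_lt.2 ⟨by linarith [P2 ε c u hε i4 h],
    by linarith [P3 ε c u hε i5 h]⟩) cp h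
  exact abs_le.2 ⟨by linarith, by linarith⟩

lemma sol_of_stat {k : ℝ → ℝ} {ξ ε α β : ℝ} {ρ : ℝ → ℝ} (K : Ad k ξ)
    (hk : ContDiff ℝ 2 k) (hε : 0 < ε) (hα : 0 < α) (hβ : 0 < β)
    (h : IsStatSol k ε α β ρ) : ∃ c, Sol k ε α β c (fun x => ρ x - 1/2) := by
  obtain ⟨hρ, hd, hl, hr⟩ := h
  have hU : UniqueDiffOn ℝ (Icc (0:ℝ) 1) := uniqueDiffOn_Icc one_pos
  have hρd : DifferentiableOn ℝ ρ (Icc (0:ℝ) 1) := hρ.differentiableOn (by norm_num)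
  have hρ' : DifferentiableOn ℝ (derivWithin ρ (Icc (0:ℝ) 1)) (Icc (0:ℝ) 1) :=
    (hρ.derivWithin (m := 1) hU (by norm_num)).differentiableOn (by norm_num)
  have hkd : Differentiable ℝ k := hk.differentiable (by norm_num)
  have hfd : DifferentiableOn ℝ (fun y => k y * flux ε ρ y) (Icc (0:ℝ) 1) := by
    unfold flux
    exact hkd.differentiableOn.mul ((hρ'.const_mul _).add (hρd.mul (hρd.const_sub 1)))
  have hconst : ∀ x ∈ Icc (0:ℝ) 1, k x * flux ε ρ x = k 0 * flux ε ρ 0 := by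
    refine constant_of_derivWithin_zero hfd (fun x hx => hd x ⟨hx.1, hx.2.le⟩)
  refine ⟨k 0 * flux ε ρ 0, ?_, ?_, ?_⟩
  · intro x hx
    have h1 := ((hρd x hx).hasDerivWithinAt).sub_const (1/2)
    refine h1.congr_deriv ?_
    have kx := (K.pos x hx).ne'
    rw [← hconst x hx]
    unfold flux
    field_simp
    ring
  · have k0 := (K.pos 0 (by simp)).ne'
    rw [hl]
    field_simp
    ring
  · have k1 := (K.pos 1 (by simp)).ne'
    rw [← hconst 1 (by simp), hr]
    field_simp

lemma sqrt_quarter (a b : ℝ) : √(1/4 - a / (4 * b)) = 1/2 * √(1 - a / b) := by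
  have : 1/4 - a / (4 * b) = (1/2)^2 * (1 - a / b) := by
    rw [mul_comm 4 b, ← div_div]; ring
  rw [this, Real.sqrt_mul (by norm_num), Real.sqrt_sq (by norm_num)]

/-- In the transitional/canard parameter regions
(`ρ_c^0 < α < 1`, `α ≠ 1 - ρ_c^0`; `1 - ρ_c^1 < β < 1`, `β ≠ ρ_c^1`), at every interior
point `x ∈ (0,1)` the solutions of the stationary boundary value problem converge, as
`ε → 0`, to the canard profile `ρ_Sc(x)`. -/
theorem bvp_interior_converges_to_canard
    (k : ℝ → ℝ) (ξs : ℝ)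
    (hk : ContDiff ℝ 2 k)
    (hkpos : ∀ x ∈ Icc (0:ℝ) 1, 0 < k x)
    (hξs : ξs ∈ Ioo (0:ℝ) 1)
    (hmin : ∀ x ∈ Icc (0:ℝ) 1, x ≠ ξs → k ξs < k x)
    (hk's : deriv k ξs = 0)
    (hk''s : 0 < deriv (deriv k) ξs)
    (α β : ℝ)
    (hα1 : rhoC0 k ξs < α) (hα2 : α < 1) (hα3 : α ≠ 1 - rhoC0 k ξs)
    (hβ1 : 1 - rhoC1 k ξs < β) (hβ2 : β < 1) (hβ3 : β ≠ rhoC1 k ξs)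
    (x : ℝ) (hx : x ∈ Ioo (0:ℝ) 1) :
    ∀ δ > 0, ∃ ε₀ > 0, ∀ ε : ℝ, 0 < ε → ε < ε₀ →
      ∀ ρ : ℝ → ℝ, IsStatSol k ε α β ρ →
        |ρ x - rhoSc k ξs x| < δ := by
  have K : Ad k ξs := ⟨hk.continuous, hkpos, hξs, hmin⟩
  have m0 : (0:ℝ) ∈ Icc (0:ℝ) 1 := by simp
  have m1 : (1:ℝ) ∈ Icc (0:ℝ) 1 := by simp
  unfold rhoC0 rhoCMinus at hα1
  unfold rhoC1 rhoCPlus at hβ1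
  have hα : 1/2 - √(1/4 - k ξs / (4 * k 0)) < α := by rw [sqrt_quarter]; linarith
  have hβ : 1/2 - √(1/4 - k ξs / (4 * k 1)) < β := by rw [sqrt_quarter]; linarith
  have half : ∀ y ∈ Icc (0:ℝ) 1, √(1/4 - k ξs / (4 * k y)) ≤ 1/2 := by
    intro y hy
    have h1 : 0 < k ξs / (4 * k y) := div_pos K.pos0 (by linarith [K.pos y hy])
    exact Real.sqrt_le_iff.2 ⟨by norm_num, by norm_num at h1 ⊢; linarith⟩
  have hα0 : 0 < α := by linarith [half 0 m0]
  have hβ0 : 0 < β := by linarith [half 1 m1]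
  intro δ hδ
  by_cases hxξ : x ≤ ξs
  · obtain ⟨ε0, h0, H⟩ := track_left K hα hα0 hβ hβ0 hx hxξ (half_pos hδ)
    refine ⟨ε0, h0, fun ε hε hε0 ρ hρ => ?_⟩
    obtain ⟨c, hc⟩ := sol_of_stat K hk hε hα0 hβ0 hρ
    have := H ε c _ hε hε0 hc
    rw [sqrt_quarter] at this
    rw [rhoSc, if_pos hxξ, rhoCPlus]
    have e : ρ x - 1/2 * (1 + √(1 - k ξs / k x)) = ρ x - 1/2 - 1/2 * √(1 - k ξs / k x) := by ring
    rw [e]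
    linarith
  · obtain ⟨ε0, h0, H⟩ := track_left K.refl (α := β) (β := α) (x := 1 - x) (by simpa using hβ) hβ0
      (by simpa using hα) hα0 ⟨by linarith [hx.2], by linarith [hx.1]⟩ (by linarith) (half_pos hδ)
    refine ⟨ε0, h0, fun ε hε hε0 ρ hρ => ?_⟩
    obtain ⟨c, hc⟩ := sol_of_stat K hk hε hα0 hβ0 hρ
    have := H ε c _ hε hε0 hc.refl
    simp only [sub_sub_cancel] at this
    rw [sqrt_quarter, abs_sub_comm] at this
    rw [rhoSc, if_neg hxξ, rhoCMinus]
    have e : ρ x - 1/2 * (1 - √(1 - k ξs / k x)) = 1/2 * √(1 - k ξs / k x) - -(ρ x - 1/2) := by ring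
    rw [e]
    linarith
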